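/- The polynomial algebra ℚ[x_1,…,x_8] is a free module of rank 696729600 over its invariant subalgebra ℚ[x_1,…,x_8]^{W(E₈)}. -/

import Mathlib

open MvPolynomial

noncomputable section

/-- The Cartan matrix of type `E₈` in Bourbaki numbering. -/
def cartanE8 : Matrix (Fin 8) (Fin 8) ℚ :=
  !![2, 0, -1, 0, 0, 0, 0, 0;
     0, 2, 0, -1, 0, 0, 0, 0;
     -1, 0, 2, -1, 0, 0, 0, 0;
     0, -1, -1, 2, -1, 0, 0, 0;
     0, 0, 0, -1, 2, -1, 0, 0;
     0, 0, 0, 0, -1, 2, -1, 0;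
     0, 0, 0, 0, 0, -1, 2, -1;
     0, 0, 0, 0, 0, 0, -1, 2]

/-- The linear functional `v ↦ ∑ j, A j i * v j`. -/
def phiE8 (i : Fin 8) : (Fin 8 → ℚ) →ₗ[ℚ] ℚ :=
  ∑ j, cartanE8 j i • LinearMap.proj j

lemma phiE8_apply (i : Fin 8) (v : Fin 8 → ℚ) :
    phiE8 i v = ∑ j, cartanE8 j i * v j := by
  simp [phiE8, LinearMap.proj]

/-- The simple reflection `s_i` as a linear endomorphism:
`s_i (e_j) = e_j - A j i • e_i`. -/
def reflE8 (i : Fin 8) : Module.End ℚ (Fin 8 → ℚ) :=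
  LinearMap.id - (phiE8 i).smulRight (Pi.single i 1)

lemma cartanE8_diag (i : Fin 8) : cartanE8 i i = 2 := by
  fin_cases i <;> norm_num [cartanE8]

lemma phiE8_single (i : Fin 8) : phiE8 i (Pi.single i 1) = 2 := by
  rw [phiE8_apply]
  rw [Finset.sum_eq_single i]
  · simp [cartanE8_diag]
  · intro b _ hb
    simp [Pi.single_apply, hb]
  · simp

lemma reflE8_apply_self (i : Fin 8) (v : Fin 8 → ℚ) :
    reflE8 i (reflE8 i v) = v := by
  have h : phiE8 i (reflE8 i v) = - phiE8 i v := by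
    simp only [reflE8, LinearMap.sub_apply, LinearMap.id_apply,
      LinearMap.smulRight_apply, map_sub, map_smul, smul_eq_mul, phiE8_single]
    ring
  have h2 : reflE8 i (reflE8 i v) = reflE8 i v - phiE8 i (reflE8 i v) • (Pi.single i 1 : Fin 8 → ℚ) := rfl
  rw [h2, h]
  have h3 : reflE8 i v = v - phiE8 i v • (Pi.single i 1 : Fin 8 → ℚ) := rfl
  rw [h3]
  module

lemma reflE8_invol (i : Fin 8) : reflE8 i * reflE8 i = 1 := by
  apply LinearMap.ext
  intro v
  exact reflE8_apply_self i v

/-- The simple reflection `s_i` as an element of `GL(ℚ⁸)`. -/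
def sE8 (i : Fin 8) : (Module.End ℚ (Fin 8 → ℚ))ˣ :=
  ⟨reflE8 i, reflE8 i, reflE8_invol i, reflE8_invol i⟩

/-- The Weyl group `W(E₈)`, the subgroup of `GL(ℚ⁸)` generated by the simple
reflections. -/
def WeylE8 : Subgroup (Module.End ℚ (Fin 8 → ℚ))ˣ :=
  Subgroup.closure (Set.range sE8)

/-- The action of an element `g ∈ GL(ℚ⁸)` on polynomials by linear substitution
of variables: `(g · f)(x) = f (g⁻¹ x)`, i.e. `X i ↦ ∑ j, (g⁻¹ e_j) i • X j`. -/
def polyAct (g : (Module.End ℚ (Fin 8 → ℚ))ˣ) :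
    MvPolynomial (Fin 8) ℚ →ₐ[ℚ] MvPolynomial (Fin 8) ℚ :=
  aeval (fun i => ∑ j, C (((g⁻¹ : (Module.End ℚ (Fin 8 → ℚ))ˣ) :
    Module.End ℚ (Fin 8 → ℚ)) (Pi.single j 1) i) * X j)

end

/-- The invariant subalgebra `ℚ[x₁,…,x₈]^{W(E₈)}`. -/
noncomputable def invSubalgebra : Subalgebra ℚ (MvPolynomial (Fin 8) ℚ) :=
  ⨅ g ∈ WeylE8, AlgHom.equalizer (polyAct g) (AlgHom.id ℚ (MvPolynomial (Fin 8) ℚ))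

/-! ### Part A: the order of the Weyl group -/

/-- Integral vectors, in coordinates with respect to the simple roots, shifted by `8`. -/
structure T8 where
  (a b c d e f g h : ℕ)
deriving DecidableEq

namespace T8

/-- Equality of all coordinates but the `i`-th one. -/
def eqOff (i : Fin 8) (r s : T8) : Bool :=
  (i == 0 || r.a == s.a) && (i == 1 || r.b == s.b) && (i == 2 || r.c == s.c) &&
  (i == 3 || r.d == s.d) && (i == 4 || r.e == s.e) && (i == 5 || r.f == s.f) &&
  (i == 6 || r.g == s.g) && (i == 7 || r.h == s.h)

/-- `s` is the image of `r` under the `i`-th simple reflection. -/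
def isRefl (i : Fin 8) (r s : T8) : Bool :=
  (match i with
  | 0 => r.a + s.a == r.c + 8
  | 1 => r.b + s.b == r.d + 8
  | 2 => r.c + s.c == r.a + r.d
  | 3 => r.d + s.d + 8 == r.b + r.c + r.e
  | 4 => r.e + s.e == r.d + r.f
  | 5 => r.f + s.f == r.e + r.g
  | 6 => r.g + s.g == r.f + r.h
  | 7 => r.h + s.h == r.g + 8) && eqOff i r s

/-- The `i`-th simple reflection lowers `r`. -/
def pos (i : Fin 8) (r : T8) : Bool :=
  match i with
  | 0 => Nat.blt (r.c + 8) (r.a + r.a)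
  | 1 => Nat.blt (r.d + 8) (r.b + r.b)
  | 2 => Nat.blt (r.a + r.d) (r.c + r.c)
  | 3 => Nat.blt (r.b + r.c + r.e) (r.d + r.d + 8)
  | 4 => Nat.blt (r.d + r.f) (r.e + r.e)
  | 5 => Nat.blt (r.e + r.g) (r.f + r.f)
  | 6 => Nat.blt (r.f + r.h) (r.g + r.g)
  | 7 => Nat.blt (r.g + 8) (r.h + r.h)

/-- An injective encoding (for small coordinates), used to test that vectors are different. -/
def key (r : T8) : ℕ :=
  r.a + 16 * (r.b + 16 * (r.c + 16 * (r.d + 16 * (r.e + 16 * (r.f + 16 * (r.g + 16 * r.h))))))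

/-- The inner product. -/
def ip (r s : T8) : ℤ :=
  ((r.a : ℤ) - 8) * (2 * s.a - s.c - 8) + ((r.b : ℤ) - 8) * (2 * s.b - s.d - 8) +
  ((r.c : ℤ) - 8) * (2 * s.c - s.a - s.d) + ((r.d : ℤ) - 8) * (2 * s.d + 8 - s.b - s.c - s.e) +
  ((r.e : ℤ) - 8) * (2 * s.e - s.d - s.f) + ((r.f : ℤ) - 8) * (2 * s.f - s.e - s.g) +
  ((r.g : ℤ) - 8) * (2 * s.g - s.f - s.h) + ((r.h : ℤ) - 8) * (2 * s.h - s.g - 8)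

/-- The corresponding rational vector. -/
def toV (r : T8) : Fin 8 → ℚ :=
  ![(r.a : ℚ) - 8, r.b - 8, r.c - 8, r.d - 8, r.e - 8, r.f - 8, r.g - 8, r.h - 8]

/-- The simple roots. -/
def simple (i : Fin 8) : T8 :=
  match i with
  | 0 => ⟨9,8,8,8,8,8,8,8⟩
  | 1 => ⟨8,9,8,8,8,8,8,8⟩
  | 2 => ⟨8,8,9,8,8,8,8,8⟩
  | 3 => ⟨8,8,8,9,8,8,8,8⟩
  | 4 => ⟨8,8,8,8,9,8,8,8⟩
  | 5 => ⟨8,8,8,8,8,9,8,8⟩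
  | 6 => ⟨8,8,8,8,8,8,9,8⟩
  | 7 => ⟨8,8,8,8,8,8,8,9⟩

end T8

/-- The 240 roots, each one (but the first) a simple reflection of an earlier one. -/
def rootsT : List T8 := [
  ⟨10,11,12,14,13,12,11,10⟩, ⟨10,11,12,14,13,12,11,9⟩, ⟨10,11,12,14,13,12,10,9⟩, ⟨10,11,12,14,13,11,10,9⟩,
  ⟨10,11,12,14,12,11,10,9⟩, ⟨10,11,12,13,12,11,10,9⟩, ⟨10,10,12,13,12,11,10,9⟩, ⟨10,11,11,13,12,11,10,9⟩,
  ⟨10,10,11,13,12,11,10,9⟩, ⟨9,11,11,13,12,11,10,9⟩, ⟨9,10,11,13,12,11,10,9⟩, ⟨10,10,11,12,12,11,10,9⟩,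
  ⟨9,10,11,12,12,11,10,9⟩, ⟨10,10,11,12,11,11,10,9⟩, ⟨9,10,10,12,12,11,10,9⟩, ⟨9,10,11,12,11,11,10,9⟩,
  ⟨10,10,11,12,11,10,10,9⟩, ⟨9,10,10,12,11,11,10,9⟩, ⟨9,10,11,12,11,10,10,9⟩, ⟨10,10,11,12,11,10,9,9⟩,
  ⟨9,10,10,11,11,11,10,9⟩, ⟨9,10,10,12,11,10,10,9⟩, ⟨9,10,11,12,11,10,9,9⟩, ⟨10,10,11,12,11,10,9,8⟩,
  ⟨9,9,10,11,11,11,10,9⟩, ⟨9,10,10,11,11,10,10,9⟩, ⟨9,10,10,12,11,10,9,9⟩, ⟨9,10,11,12,11,10,9,8⟩,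
  ⟨9,9,10,11,11,10,10,9⟩, ⟨9,10,10,11,10,10,10,9⟩, ⟨9,10,10,11,11,10,9,9⟩, ⟨9,10,10,12,11,10,9,8⟩,
  ⟨9,9,10,11,10,10,10,9⟩, ⟨9,9,10,11,11,10,9,9⟩, ⟨9,10,10,11,10,10,9,9⟩, ⟨9,10,10,11,11,10,9,8⟩,
  ⟨9,9,10,10,10,10,10,9⟩, ⟨9,9,10,11,10,10,9,9⟩, ⟨9,9,10,11,11,10,9,8⟩, ⟨9,10,10,11,10,9,9,9⟩,
  ⟨9,10,10,11,10,10,9,8⟩, ⟨9,9,9,10,10,10,10,9⟩, ⟨9,9,10,10,10,10,9,9⟩, ⟨9,9,10,11,10,9,9,9⟩,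
  ⟨9,9,10,11,10,10,9,8⟩, ⟨9,10,10,11,10,9,9,8⟩, ⟨8,9,9,10,10,10,10,9⟩, ⟨9,9,9,10,10,10,9,9⟩,
  ⟨9,9,10,10,10,9,9,9⟩, ⟨9,9,10,10,10,10,9,8⟩, ⟨9,9,10,11,10,9,9,8⟩, ⟨9,10,10,11,10,9,8,8⟩,
  ⟨8,9,9,10,10,10,9,9⟩, ⟨9,9,9,10,10,9,9,9⟩, ⟨9,9,9,10,10,10,9,8⟩, ⟨9,9,10,10,9,9,9,9⟩,
  ⟨9,9,10,10,10,9,9,8⟩, ⟨9,9,10,11,10,9,8,8⟩, ⟨8,9,9,10,10,9,9,9⟩, ⟨8,9,9,10,10,10,9,8⟩,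
  ⟨9,9,9,10,9,9,9,9⟩, ⟨9,9,9,10,10,9,9,8⟩, ⟨9,9,10,10,9,9,9,8⟩, ⟨9,9,10,10,10,9,8,8⟩,
  ⟨8,9,9,10,9,9,9,9⟩, ⟨8,9,9,10,10,9,9,8⟩, ⟨9,9,9,9,9,9,9,9⟩, ⟨9,9,9,10,9,9,9,8⟩,
  ⟨9,9,9,10,10,9,8,8⟩, ⟨9,9,10,10,9,9,8,8⟩, ⟨8,9,9,9,9,9,9,9⟩, ⟨8,9,9,10,9,9,9,8⟩,
  ⟨8,9,9,10,10,9,8,8⟩, ⟨9,8,9,9,9,9,9,9⟩, ⟨9,9,9,9,9,9,9,8⟩, ⟨9,9,9,10,9,9,8,8⟩,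
  ⟨9,9,10,10,9,8,8,8⟩, ⟨8,8,9,9,9,9,9,9⟩, ⟨8,9,8,9,9,9,9,9⟩, ⟨8,9,9,9,9,9,9,8⟩,
  ⟨8,9,9,10,9,9,8,8⟩, ⟨9,8,9,9,9,9,9,8⟩, ⟨9,9,9,9,9,9,8,8⟩, ⟨9,9,9,10,9,8,8,8⟩,
  ⟨8,8,8,9,9,9,9,9⟩, ⟨8,8,9,9,9,9,9,8⟩, ⟨8,9,8,9,9,9,9,8⟩, ⟨8,9,9,9,9,9,8,8⟩,
  ⟨8,9,9,10,9,8,8,8⟩, ⟨9,8,9,9,9,9,8,8⟩, ⟨9,9,9,9,9,8,8,8⟩, ⟨8,8,8,8,9,9,9,9⟩,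
  ⟨8,8,8,9,9,9,9,8⟩, ⟨8,8,9,9,9,9,8,8⟩, ⟨8,9,8,9,9,9,8,8⟩, ⟨8,9,9,9,9,8,8,8⟩,
  ⟨9,8,9,9,9,8,8,8⟩, ⟨9,9,9,9,8,8,8,8⟩, ⟨8,8,8,8,8,9,9,9⟩, ⟨8,8,8,8,9,9,9,8⟩,
  ⟨8,8,8,9,9,9,8,8⟩, ⟨8,8,9,9,9,8,8,8⟩, ⟨8,9,8,9,9,8,8,8⟩, ⟨8,9,9,9,8,8,8,8⟩,
  ⟨9,8,9,9,8,8,8,8⟩, ⟨8,8,8,8,8,8,9,9⟩, ⟨8,8,8,8,8,9,9,8⟩, ⟨8,8,8,8,9,9,8,8⟩,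
  ⟨8,8,8,9,9,8,8,8⟩, ⟨8,8,9,9,8,8,8,8⟩, ⟨8,9,8,9,8,8,8,8⟩, ⟨9,8,9,8,8,8,8,8⟩,
  ⟨8,8,8,8,8,8,8,9⟩, ⟨8,8,8,8,8,8,9,8⟩, ⟨8,8,8,8,8,9,8,8⟩, ⟨8,8,8,8,9,8,8,8⟩,
  ⟨8,8,8,9,8,8,8,8⟩, ⟨8,8,9,8,8,8,8,8⟩, ⟨8,9,8,8,8,8,8,8⟩, ⟨9,8,8,8,8,8,8,8⟩,
  ⟨8,8,8,8,8,8,8,7⟩, ⟨8,8,8,8,8,8,7,8⟩, ⟨8,8,8,8,8,7,8,8⟩, ⟨8,8,8,8,7,8,8,8⟩,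
  ⟨8,8,8,7,8,8,8,8⟩, ⟨8,8,7,8,8,8,8,8⟩, ⟨8,7,8,8,8,8,8,8⟩, ⟨7,8,8,8,8,8,8,8⟩,
  ⟨8,8,8,8,8,8,7,7⟩, ⟨8,8,8,8,8,7,7,8⟩, ⟨8,8,8,8,7,7,8,8⟩, ⟨8,8,8,7,7,8,8,8⟩,
  ⟨8,7,8,7,8,8,8,8⟩, ⟨8,8,7,7,8,8,8,8⟩, ⟨7,8,7,8,8,8,8,8⟩, ⟨8,8,8,8,8,7,7,7⟩,
  ⟨8,8,8,8,7,7,7,8⟩, ⟨8,8,8,7,7,7,8,8⟩, ⟨8,7,8,7,7,8,8,8⟩, ⟨8,8,7,7,7,8,8,8⟩,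
  ⟨8,7,7,7,8,8,8,8⟩, ⟨7,8,7,7,8,8,8,8⟩, ⟨8,8,8,8,7,7,7,7⟩, ⟨8,8,8,7,7,7,7,8⟩,
  ⟨8,7,8,7,7,7,8,8⟩, ⟨8,8,7,7,7,7,8,8⟩, ⟨8,7,7,7,7,8,8,8⟩, ⟨7,8,7,7,7,8,8,8⟩,
  ⟨7,7,7,7,8,8,8,8⟩, ⟨8,8,8,7,7,7,7,7⟩, ⟨8,7,8,7,7,7,7,8⟩, ⟨8,8,7,7,7,7,7,8⟩,
  ⟨8,7,7,7,7,7,8,8⟩, ⟨7,8,7,7,7,7,8,8⟩, ⟨7,7,7,7,7,8,8,8⟩, ⟨8,7,7,6,7,8,8,8⟩,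
  ⟨8,7,8,7,7,7,7,7⟩, ⟨8,8,7,7,7,7,7,7⟩, ⟨8,7,7,7,7,7,7,8⟩, ⟨7,8,7,7,7,7,7,8⟩,
  ⟨7,7,7,7,7,7,8,8⟩, ⟨8,7,7,6,7,7,8,8⟩, ⟨7,7,7,6,7,8,8,8⟩, ⟨8,7,7,7,7,7,7,7⟩,
  ⟨7,8,7,7,7,7,7,7⟩, ⟨7,7,7,7,7,7,7,8⟩, ⟨8,7,7,6,7,7,7,8⟩, ⟨7,7,7,6,7,7,8,8⟩,
  ⟨8,7,7,6,6,7,8,8⟩, ⟨7,7,6,6,7,8,8,8⟩, ⟨7,7,7,7,7,7,7,7⟩, ⟨8,7,7,6,7,7,7,7⟩,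
  ⟨7,7,7,6,7,7,7,8⟩, ⟨8,7,7,6,6,7,7,8⟩, ⟨7,7,6,6,7,7,8,8⟩, ⟨7,7,7,6,6,7,8,8⟩,
  ⟨7,7,7,6,7,7,7,7⟩, ⟨8,7,7,6,6,7,7,7⟩, ⟨7,7,6,6,7,7,7,8⟩, ⟨7,7,7,6,6,7,7,8⟩,
  ⟨8,7,7,6,6,6,7,8⟩, ⟨7,7,6,6,6,7,8,8⟩, ⟨7,7,6,6,7,7,7,7⟩, ⟨7,7,7,6,6,7,7,7⟩,
  ⟨8,7,7,6,6,6,7,7⟩, ⟨7,7,6,6,6,7,7,8⟩, ⟨7,7,7,6,6,6,7,8⟩, ⟨7,7,6,5,6,7,8,8⟩,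
  ⟨7,7,6,6,6,7,7,7⟩, ⟨7,7,7,6,6,6,7,7⟩, ⟨8,7,7,6,6,6,6,7⟩, ⟨7,7,6,5,6,7,7,8⟩,
  ⟨7,7,6,6,6,6,7,8⟩, ⟨7,6,6,5,6,7,8,8⟩, ⟨7,7,6,5,6,7,7,7⟩, ⟨7,7,6,6,6,6,7,7⟩,
  ⟨7,7,7,6,6,6,6,7⟩, ⟨7,6,6,5,6,7,7,8⟩, ⟨7,7,6,5,6,6,7,8⟩, ⟨7,6,6,5,6,7,7,7⟩,
  ⟨7,7,6,5,6,6,7,7⟩, ⟨7,7,6,6,6,6,6,7⟩, ⟨7,6,6,5,6,6,7,8⟩, ⟨7,7,6,5,5,6,7,8⟩,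
  ⟨7,6,6,5,6,6,7,7⟩, ⟨7,7,6,5,5,6,7,7⟩, ⟨7,7,6,5,6,6,6,7⟩, ⟨7,6,6,5,5,6,7,8⟩,
  ⟨7,6,6,5,5,6,7,7⟩, ⟨7,6,6,5,6,6,6,7⟩, ⟨7,7,6,5,5,6,6,7⟩, ⟨7,6,6,4,5,6,7,8⟩,
  ⟨7,6,6,4,5,6,7,7⟩, ⟨7,6,6,5,5,6,6,7⟩, ⟨7,7,6,5,5,5,6,7⟩, ⟨7,6,5,4,5,6,7,8⟩,
  ⟨7,6,5,4,5,6,7,7⟩, ⟨7,6,6,4,5,6,6,7⟩, ⟨7,6,6,5,5,5,6,7⟩, ⟨6,6,5,4,5,6,7,8⟩,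
  ⟨6,6,5,4,5,6,7,7⟩, ⟨7,6,5,4,5,6,6,7⟩, ⟨7,6,6,4,5,5,6,7⟩, ⟨6,6,5,4,5,6,6,7⟩,
  ⟨7,6,5,4,5,5,6,7⟩, ⟨7,6,6,4,4,5,6,7⟩, ⟨6,6,5,4,5,5,6,7⟩, ⟨7,6,5,4,4,5,6,7⟩,
  ⟨6,6,5,4,4,5,6,7⟩, ⟨7,6,5,3,4,5,6,7⟩, ⟨6,6,5,3,4,5,6,7⟩, ⟨7,5,5,3,4,5,6,7⟩,
  ⟨6,5,5,3,4,5,6,7⟩, ⟨6,6,4,3,4,5,6,7⟩, ⟨6,5,4,3,4,5,6,7⟩, ⟨6,5,4,2,4,5,6,7⟩,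
  ⟨6,5,4,2,3,5,6,7⟩, ⟨6,5,4,2,3,4,6,7⟩, ⟨6,5,4,2,3,4,5,7⟩, ⟨6,5,4,2,3,4,5,6⟩]

/-- Each element of the second list is a simple reflection of an element before it. -/
def chainCheck : List T8 → List T8 → Bool
  | _, [] => true
  | seen, r :: l =>
    (seen.any fun s => (List.finRange 8).any fun i => T8.isRefl i s r) &&
      chainCheck (r :: seen) l

/-- The second list is closed under simple reflections (up to the first one). -/
def closedCheck : List T8 → List T8 → Bool
  | _, [] => true
  | seen, r :: l =>
    ((List.finRange 8).all fun i =>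
      T8.isRefl i r r || (bif T8.pos i r then l.any (T8.isRefl i r) else seen.any (T8.isRefl i r))) &&
      closedCheck (r :: seen) l

/-- The index of the `k`-th base vector. -/
def bIdx (k : ℕ) : Fin 8 := Fin.ofNat 8 (7 - k)

/-- Roots having the same products with the first `k` base vectors as the next one. -/
def candT (k : ℕ) : List T8 :=
  rootsT.filter fun r => (List.range k).all fun j =>
    decide (T8.ip r (T8.simple (bIdx j)) = T8.ip (T8.simple (bIdx k)) (T8.simple (bIdx j)))

/-- One step of the reachability search. -/
def nextT (C S : List T8) : List T8 :=
  C.filter fun r => S.any fun s => decide (r = s) || decide (T8.ip r s = 1)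

set_option maxRecDepth 100000 in
lemma rootsT_closed : closedCheck [] rootsT = true := by decide +kernel

set_option maxRecDepth 100000 in
lemma rootsT_nodup : (rootsT.map T8.key).Nodup := by decide +kernel

set_option maxRecDepth 100000 in
lemma rootsT_chain : chainCheck [⟨10,11,12,14,13,12,11,10⟩] rootsT.tail = true := by decide +kernel

set_option maxRecDepth 100000 in
lemma candT_length : (List.range 8).map (fun k => (candT k).length) =
    [240, 56, 27, 16, 10, 6, 2, 1] := by decide +kernel

set_option maxRecDepth 100000 in
lemma candT_reach : [1,2,3,4,5,6,7].all (fun k => (candT k).all fun r =>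
    (nextT (candT k) (nextT (candT k) (nextT (candT k) [T8.simple (bIdx k)]))).any
      fun s => decide (r = s)) = true := by decide +kernel

namespace E8Aux

open T8

/-- The general linear group. -/
abbrev GL8 := (Module.End ℚ (Fin 8 → ℚ))ˣ

/-- The invariant bilinear form. -/
noncomputable def BF (v w : Fin 8 → ℚ) : ℚ := ∑ i, v i * phiE8 i w

lemma BF_sub_left (u v w) : BF (u - v) w = BF u w - BF v w := by
  simp [BF, sub_mul, Finset.sum_sub_distrib]
lemma BF_sub_right (u v w) : BF u (v - w) = BF u v - BF u w := by
  simp [BF, mul_sub, Finset.sum_sub_distrib]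
lemma BF_smul_left (c : ℚ) (v w) : BF (c • v) w = c * BF v w := by
  simp [BF, mul_assoc, Finset.mul_sum]
lemma BF_smul_right (c : ℚ) (v w) : BF v (c • w) = c * BF v w := by
  simp only [BF, map_smul, smul_eq_mul, Finset.mul_sum]
  exact Finset.sum_congr rfl fun i _ => by ring

lemma BF_symm (v w) : BF v w = BF w v := by
  simp only [BF, phiE8_apply, Fin.sum_univ_eight, cartanE8, Matrix.of_apply, Matrix.cons_val]
  ring

lemma BF_single_left (i : Fin 8) (w) : BF (Pi.single i 1) w = phiE8 i w := by
  simp [BF, Pi.single_apply]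

lemma BF_single_right (i : Fin 8) (w) : BF w (Pi.single i 1) = phiE8 i w := by
  rw [BF_symm, BF_single_left]

lemma reflE8_apply (i : Fin 8) (v) : reflE8 i v = v - phiE8 i v • (Pi.single i 1 : Fin 8 → ℚ) := rfl

lemma BF_refl (i : Fin 8) (v w) : BF (reflE8 i v) (reflE8 i w) = BF v w := by
  simp only [reflE8_apply, BF_sub_left, BF_sub_right, BF_smul_left, BF_smul_right,
    BF_single_left, BF_single_right, phiE8_single, map_sub, map_smul, smul_eq_mul]
  ring

lemma BF_weyl {g : GL8} (hg : g ∈ WeylE8) : ∀ v w, BF (g • v) (g • w) = BF v w := by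
  induction hg using Subgroup.closure_induction with
  | mem x hx => obtain ⟨i, rfl⟩ := hx; exact BF_refl i
  | one => simp
  | mul x y _ _ hx hy => intro v w; rw [mul_smul, mul_smul, hx, hy]
  | inv x _ hx => intro v w; rw [← hx, smul_inv_smul, smul_inv_smul]

lemma sE8_mem (i : Fin 8) : sE8 i ∈ WeylE8 := Subgroup.subset_closure ⟨i, rfl⟩

lemma sE8_smul (i : Fin 8) (v) : sE8 i • v = reflE8 i v := rfl

lemma BF_toV (r s : T8) : BF r.toV s.toV = (ip r s : ℚ) := by
  simp only [BF, phiE8_apply, Fin.sum_univ_eight, cartanE8, Matrix.of_apply, Matrix.cons_val,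
    T8.toV, T8.ip]
  push_cast
  ring

lemma toV_simple (i : Fin 8) : (simple i).toV = Pi.single i 1 := by
  funext j
  fin_cases i <;> fin_cases j <;> norm_num [T8.toV, simple, Pi.single_apply]

lemma refl_toV {i : Fin 8} {r s : T8} (h : isRefl i r s = true) :
    reflE8 i r.toV = s.toV := by
  rw [reflE8_apply, phiE8_apply]
  obtain ⟨a, b, c, d, e, f, g, h⟩ := r
  obtain ⟨a', b', c', d', e', f', g', h'⟩ := s
  have key : ∀ {x y : ℕ}, x = y → (x : ℚ) = y := fun h => by rw [h]
  fin_cases i <;>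
  · simp [isRefl, eqOff] at h
    casesm* _ ∧ _
    subst_vars
    rename_i h0
    have h0 := key h0
    push_cast at h0
    funext j
    fin_cases j <;> simp [T8.toV, Fin.sum_univ_eight, cartanE8]
    all_goals linarith

lemma isRefl_symm_toV {i : Fin 8} {r s : T8} (h : isRefl i r s = true) :
    sE8 i • r.toV = s.toV := refl_toV h

/-- The set of roots. -/
def Roots : Set (Fin 8 → ℚ) := {v | ∃ r ∈ rootsT, r.toV = v}

lemma closedCheck_spec : ∀ (l seen : List T8), closedCheck seen l = true →
    ∀ r ∈ l, ∀ i, ∃ s, (s ∈ seen ∨ s ∈ l) ∧ isRefl i r s = true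
  | [], _, _, r, hr, _ => by simp at hr
  | t :: l, seen, h, r, hr, i => by
    rw [closedCheck, Bool.and_eq_true] at h
    rcases List.mem_cons.1 hr with rfl | hr
    · have := List.all_eq_true.1 h.1 i (List.mem_finRange i)
      rw [Bool.or_eq_true] at this
      rcases this with h | h
      · exact ⟨r, by simp, h⟩
      · cases hp : T8.pos i r <;> simp only [hp, cond_true, cond_false] at h <;>
        · obtain ⟨s, hs, h⟩ := List.any_eq_true.1 h
          exact ⟨s, by simp [hs], h⟩
    · obtain ⟨s, hs, h'⟩ := closedCheck_spec l (t :: seen) h.2 r hr i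
      refine ⟨s, ?_, h'⟩
      simp only [List.mem_cons] at hs ⊢
      tauto

lemma roots_refl {v} (hv : v ∈ Roots) (i : Fin 8) : reflE8 i v ∈ Roots := by
  obtain ⟨r, hr, rfl⟩ := hv
  obtain ⟨s, hs, h⟩ := closedCheck_spec _ _ rootsT_closed r hr i
  exact ⟨s, by simpa using hs, (refl_toV h).symm⟩

lemma roots_weyl {g : GL8} (hg : g ∈ WeylE8) : ∀ v, v ∈ Roots → g • v ∈ Roots := by
  rw [WeylE8, ← Subgroup.mem_toSubmonoid, Subgroup.closure_toSubmonoid] at hg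
  induction hg using Submonoid.closure_induction with
  | mem x hx =>
    intro v hv
    rcases hx with ⟨i, rfl⟩ | ⟨i, hi⟩
    · exact roots_refl hv i
    · have : x = sE8 i := by
        rw [← inv_inv x, ← hi]; rfl
      rw [this]; exact roots_refl hv i
  | one => simp
  | mul x y _ _ hx hy => intro v hv; rw [mul_smul]; exact hx _ (hy _ hv)

lemma chainCheck_spec (v : Fin 8 → ℚ) : ∀ (l seen : List T8), chainCheck seen l = true →
    (∀ s ∈ seen, ∃ g ∈ WeylE8, g • v = s.toV) → ∀ r ∈ l, ∃ g ∈ WeylE8, g • v = r.toV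
  | [], _, _, _, r, hr => by simp at hr
  | t :: l, seen, h, hs, r, hr => by
    rw [chainCheck, Bool.and_eq_true] at h
    have ht : ∃ g ∈ WeylE8, g • v = t.toV := by
      obtain ⟨s, hs', h⟩ := List.any_eq_true.1 h.1
      obtain ⟨i, -, h⟩ := List.any_eq_true.1 h
      obtain ⟨g, hg, hgs⟩ := hs s hs'
      exact ⟨sE8 i * g, mul_mem (sE8_mem i) hg, by rw [mul_smul, hgs, isRefl_symm_toV h]⟩
    rcases List.mem_cons.1 hr with rfl | hr
    · exact ht
    · refine chainCheck_spec v l (t :: seen) h.2 ?_ r hr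
      intro s hs'
      rcases List.mem_cons.1 hs' with rfl | hs'
      · exact ht
      · exact hs s hs'

lemma roots_trans0 : ∀ r ∈ rootsT, ∃ g ∈ WeylE8,
    g • (T8.toV ⟨10,11,12,14,13,12,11,10⟩) = r.toV := by
  have h0 : ∀ s ∈ [(⟨10,11,12,14,13,12,11,10⟩ : T8)], ∃ g ∈ WeylE8,
    g • (T8.toV ⟨10,11,12,14,13,12,11,10⟩) = s.toV := by
    intro s hs
    rw [List.mem_singleton] at hs
    exact ⟨1, one_mem _, by rw [hs, one_smul]⟩
  have := chainCheck_spec (T8.toV ⟨10,11,12,14,13,12,11,10⟩) _ _ rootsT_chain h0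
  intro r hr
  have hr' : r ∈ (⟨10,11,12,14,13,12,11,10⟩ : T8) :: rootsT.tail := hr
  rcases List.mem_cons.1 hr' with h | h
  · exact h0 r (by simp [h])
  · exact this r h

lemma simple_mem (i : Fin 8) : simple i ∈ rootsT := by
  revert i; decide +kernel

lemma roots_trans {r s : T8} (hr : r ∈ rootsT) (hs : s ∈ rootsT) :
    ∃ g ∈ WeylE8, g • r.toV = s.toV := by
  obtain ⟨g, hg, h⟩ := roots_trans0 r hr
  obtain ⟨g', hg', h'⟩ := roots_trans0 s hs
  refine ⟨g' * g⁻¹, mul_mem hg' (inv_mem hg), ?_⟩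
  rw [mul_smul, ← h, inv_smul_smul, h']

/-- The reflection in `β` belongs to the Weyl group. -/
def HasRefl (β : Fin 8 → ℚ) : Prop := ∃ g ∈ WeylE8, ∀ v, g • v = v - BF v β • β

lemma smul_sub_smul (g : GL8) (v w : Fin 8 → ℚ) (c : ℚ) :
    g • (v - c • w) = g • v - c • (g • w) := by
  change (g : Module.End ℚ (Fin 8 → ℚ)) (v - c • w) = _
  rw [map_sub, map_smul]; rfl

lemma HasRefl.conj {β} (h : HasRefl β) {w : GL8} (hw : w ∈ WeylE8) : HasRefl (w • β) := by
  obtain ⟨g, hg, h⟩ := h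
  refine ⟨w * g * w⁻¹, mul_mem (mul_mem hw hg) (inv_mem hw), fun v => ?_⟩
  rw [mul_smul, mul_smul, h, smul_sub_smul, smul_inv_smul]
  congr 2
  rw [← BF_weyl hw, smul_inv_smul]

lemma hasRefl_single (i : Fin 8) : HasRefl (Pi.single i 1) :=
  ⟨sE8 i, sE8_mem i, fun v => by rw [BF_single_right]; rfl⟩

lemma hasRefl_root {r : T8} (hr : r ∈ rootsT) : HasRefl r.toV := by
  obtain ⟨g, hg, h⟩ := roots_trans (simple_mem 0) hr
  rw [← h, toV_simple]
  exact (hasRefl_single 0).conj hg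

lemma BF_root {r : T8} (hr : r ∈ rootsT) : BF r.toV r.toV = 2 := by
  obtain ⟨g, hg, h⟩ := roots_trans (simple_mem 0) hr
  rw [← h, BF_weyl hg, toV_simple, BF_single_left, phiE8_single]

/-- The base vectors. -/
noncomputable def bV (k : ℕ) : Fin 8 → ℚ := Pi.single (bIdx k) 1

lemma bV_eq (k : ℕ) : bV k = (simple (bIdx k)).toV := (toV_simple _).symm

/-- Pointwise stabilizers of the first `k` base vectors. -/
def HS (k : ℕ) : Subgroup GL8 where
  carrier := {g | g ∈ WeylE8 ∧ ∀ j < k, g • bV j = bV j}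
  one_mem' := ⟨one_mem _, fun _ _ => one_smul _ _⟩
  mul_mem' := fun ha hb => ⟨mul_mem ha.1 hb.1, fun j hj => by
    rw [mul_smul, hb.2 j hj, ha.2 j hj]⟩
  inv_mem' := fun ha => ⟨inv_mem ha.1, fun j hj => by
    rw [inv_smul_eq_iff, ha.2 j hj]⟩

lemma mem_HS {k : ℕ} {g : GL8} : g ∈ HS k ↔ g ∈ WeylE8 ∧ ∀ j < k, g • bV j = bV j := Iff.rfl

lemma HS_step (k : ℕ) :
    Nat.card (HS k) = Nat.card (HS (k+1)) * (MulAction.orbit (HS k) (bV k)).ncard := by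
  rw [← MulAction.index_stabilizer, ← Subgroup.card_mul_index (MulAction.stabilizer (HS k) (bV k))]
  congr 1
  have hle : HS (k+1) ≤ HS k := fun g hg => ⟨hg.1, fun j hj => hg.2 j (by omega)⟩
  have : MulAction.stabilizer (HS k) (bV k) = (HS (k+1)).subgroupOf (HS k) := by
    ext ⟨g, hg⟩
    rw [MulAction.mem_stabilizer_iff, Subgroup.mem_subgroupOf]
    change g • bV k = bV k ↔ g ∈ HS (k+1)
    rw [mem_HS]
    constructor
    · intro h
      refine ⟨hg.1, fun j hj => ?_⟩
      rcases Nat.lt_succ_iff_lt_or_eq.1 hj with h' | rfl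
      · exact hg.2 j h'
      · exact h
    · intro h; exact h.2 k (Nat.lt_succ_self k)
  rw [this]
  exact Nat.card_congr (Subgroup.subgroupOfEquivOfLe hle).toEquiv

lemma mem_candT {k : ℕ} {r : T8} : r ∈ candT k ↔ r ∈ rootsT ∧
    ∀ j < k, BF r.toV (bV j) = BF (bV k) (bV j) := by
  simp only [candT, List.mem_filter, List.all_eq_true, List.mem_range, decide_eq_true_eq, bV_eq,
    BF_toV, Int.cast_inj]

/-- Reachability. -/
def Reach (k : ℕ) (v : Fin 8 → ℚ) : Prop := ∃ g ∈ HS k, g • bV k = v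

lemma reach_step {k : ℕ} {r s : T8} (hr : r ∈ candT k) (hs : s ∈ candT k) (h : ip r s = 1)
    (hR : Reach k s.toV) : Reach k r.toV := by
  obtain ⟨g, hg, hgs⟩ := hR
  rw [mem_candT] at hr hs
  have h1 : BF s.toV r.toV = 1 := by rw [BF_symm, BF_toV, h]; simp
  have hγ : HasRefl (s.toV - r.toV) := by
    obtain ⟨w, hw, hw'⟩ := hasRefl_root hr.1
    have := (hasRefl_root hs.1).conj hw
    rwa [hw', h1, one_smul] at this
  obtain ⟨w, hw, hw'⟩ := hγ
  refine ⟨w * g, mul_mem ?_ hg, ?_⟩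
  · refine ⟨hw, fun j hj => ?_⟩
    rw [hw', BF_sub_right, BF_symm, hs.2 j hj, BF_symm (bV j), hr.2 j hj]
    simp
  · rw [mul_smul, hgs, hw', BF_sub_right, BF_root hs.1, h1]
    norm_num

lemma reach_next {k : ℕ} {S : List T8} (hS : ∀ s ∈ S, s ∈ candT k ∧ Reach k s.toV) :
    ∀ r ∈ nextT (candT k) S, r ∈ candT k ∧ Reach k r.toV := by
  intro r hr
  simp only [nextT, List.mem_filter, List.any_eq_true, Bool.or_eq_true, decide_eq_true_eq] at hr
  obtain ⟨hr, s, hs, h⟩ := hr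
  rcases h with rfl | h
  · exact hS _ hs
  · exact ⟨hr, reach_step hr (hS s hs).1 h (hS s hs).2⟩

lemma bV_cand (k : ℕ) : simple (bIdx k) ∈ candT k := by
  rw [mem_candT]
  exact ⟨simple_mem _, fun j _ => by rw [bV_eq k]⟩

lemma reach_self (k : ℕ) : Reach k (simple (bIdx k)).toV :=
  ⟨1, one_mem _, by rw [one_smul, bV_eq]⟩

lemma reach_all {k : ℕ} (hk : k < 8) : ∀ r ∈ candT k, Reach k r.toV := by
  intro r hr
  rcases Nat.eq_zero_or_pos k with rfl | hk0
  · obtain ⟨g, hg, h⟩ := roots_trans (simple_mem (bIdx 0)) (mem_candT.1 hr).1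
    exact ⟨g, ⟨hg, fun j hj => by omega⟩, by rw [bV_eq, h]⟩
  · have hm : k ∈ [1,2,3,4,5,6,7] := by
      simp only [List.mem_cons, List.not_mem_nil, or_false]; omega
    have := List.all_eq_true.1 (List.all_eq_true.1 candT_reach k hm) r hr
    simp only [List.any_eq_true, decide_eq_true_eq] at this
    obtain ⟨s, hs, rfl⟩ := this
    have h0 : ∀ s ∈ [simple (bIdx k)], s ∈ candT k ∧ Reach k s.toV := by
      intro s hs
      rw [List.mem_singleton] at hs
      subst hs
      exact ⟨bV_cand k, reach_self k⟩
    exact (reach_next (reach_next (reach_next h0)) _ hs).2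

lemma orbit_eq {k : ℕ} (hk : k < 8) :
    MulAction.orbit (HS k) (bV k) = (fun r : T8 => r.toV) '' {r | r ∈ candT k} := by
  ext v
  constructor
  · rintro ⟨⟨g, hg⟩, rfl⟩
    obtain ⟨r, hr, h⟩ := roots_weyl hg.1 (bV k) ⟨_, simple_mem (bIdx k), (bV_eq k).symm⟩
    refine ⟨r, mem_candT.2 ⟨hr, fun j hj => ?_⟩, h⟩
    rw [h]
    conv_lhs => rw [← hg.2 j hj]
    exact BF_weyl hg.1 _ _
  · rintro ⟨r, hr, rfl⟩
    obtain ⟨g, hg, h⟩ := reach_all hk r hr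
    exact ⟨⟨g, hg⟩, h⟩

lemma toV_injective : Function.Injective T8.toV := by
  rintro ⟨a, b, c, d, e, f, g, h⟩ ⟨a', b', c', d', e', f', g', h'⟩ H
  have := fun i => congrFun H i
  simpa [T8.toV, Fin.forall_fin_succ] using this

lemma candT_nodup (k : ℕ) : (candT k).Nodup :=
  (List.Nodup.of_map _ rootsT_nodup).filter _

lemma orbit_ncard {k : ℕ} (hk : k < 8) :
    (MulAction.orbit (HS k) (bV k)).ncard = (candT k).length := by
  rw [orbit_eq hk, Set.ncard_image_of_injective _ toV_injective,
    ← List.toFinset_card_of_nodup (candT_nodup k), ← Set.ncard_coe_finset]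
  congr 1
  ext r; simp

lemma HS_eight : HS 8 = ⊥ := by
  rw [eq_bot_iff]
  intro g hg
  rw [Subgroup.mem_bot]
  ext1
  refine LinearMap.pi_ext' fun i => LinearMap.ext_ring ?_
  have := hg.2 (7 - i.val) (by omega)
  have hb : bV (7 - i.val) = Pi.single i 1 := by
    unfold bV; congr 1; unfold bIdx; ext; simp only [Fin.ofNat]; omega
  rw [hb] at this
  exact this

lemma HS_zero : HS 0 = WeylE8 := by
  ext g; simp [mem_HS]

theorem card_weyl : Nat.card WeylE8 = 696729600 := by
  have h := candT_length
  simp only [List.range, List.range.loop, List.map, List.cons.injEq, and_true] at h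
  obtain ⟨h0, h1, h2, h3, h4, h5, h6, h7⟩ := h
  rw [← HS_zero, HS_step, HS_step, HS_step, HS_step, HS_step, HS_step, HS_step, HS_step, HS_eight]
  simp only [zero_add, Nat.reduceAdd]
  rw [orbit_ncard, orbit_ncard, orbit_ncard, orbit_ncard, orbit_ncard, orbit_ncard, orbit_ncard,
    orbit_ncard, h0, h1, h2, h3, h4, h5, h6, h7]
  · simp
  all_goals norm_num

instance : Finite WeylE8 := Nat.finite_of_card_ne_zero (by rw [card_weyl]; norm_num)

end E8Aux

/-! ### Part B: freeness, following Chevalley -/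

namespace E8Aux

/-- The polynomial ring. -/
abbrev PS := MvPolynomial (Fin 8) ℚ

lemma mem_inv {f : PS} : f ∈ invSubalgebra ↔ ∀ g ∈ WeylE8, polyAct g f = f := by
  simp only [invSubalgebra, Algebra.mem_iInf]
  rfl

lemma polyAct_X (g : GL8) (i : Fin 8) :
    polyAct g (X i) = ∑ j, C ((g⁻¹ • (Pi.single j 1 : Fin 8 → ℚ)) i) * X j := by
  rw [polyAct, aeval_X]; rfl

lemma polyAct_one : polyAct 1 = AlgHom.id ℚ PS := by
  refine MvPolynomial.algHom_ext fun i => ?_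
  rw [polyAct_X]
  simp [Pi.single_apply]

lemma smul_expand (g : GL8) (v : Fin 8 → ℚ) (i : Fin 8) :
    (g • v) i = ∑ j, v j * (g • (Pi.single j 1 : Fin 8 → ℚ)) i := by
  change (g : Module.End ℚ (Fin 8 → ℚ)) v i =
    ∑ j, v j * (g : Module.End ℚ (Fin 8 → ℚ)) (Pi.single j 1) i
  conv_lhs => rw [pi_eq_sum_univ' v, map_sum]
  simp [Finset.sum_apply]

lemma polyAct_mul (g h : GL8) : polyAct (g * h) = (polyAct g).comp (polyAct h) := by
  refine MvPolynomial.algHom_ext fun i => ?_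
  rw [AlgHom.comp_apply, polyAct_X, polyAct_X]
  simp only [map_sum, map_mul, polyAct_X, MvPolynomial.algHom_C, MvPolynomial.algebraMap_eq]
  simp only [Finset.mul_sum]
  rw [Finset.sum_comm]
  refine Finset.sum_congr rfl fun j _ => ?_
  rw [mul_inv_rev, mul_smul, smul_expand]
  simp only [map_sum, map_mul, Finset.sum_mul]
  refine Finset.sum_congr rfl fun k _ => ?_
  ring

lemma polyAct_mul_apply (g h : GL8) (f : PS) : polyAct (g * h) f = polyAct g (polyAct h f) := by
  rw [polyAct_mul]; rfl

lemma polyAct_homog (g : GL8) {f : PS} {n : ℕ} (hf : f.IsHomogeneous n) :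
    (polyAct g f).IsHomogeneous n := by
  have := hf.aeval (fun i => ∑ j, C ((g⁻¹ • (Pi.single j 1 : Fin 8 → ℚ)) i) * X j) (n := 1) (fun i =>
    IsHomogeneous.sum _ _ _ fun j _ => isHomogeneous_C_mul_X _ _)
  rw [one_mul] at this
  exact this

lemma comp_of_homog {f : PS} {m : ℕ} (hf : f.IsHomogeneous m) (n : ℕ) :
    homogeneousComponent n f = if m = n then f else 0 := by
  rw [homogeneousComponent_of_mem hf]
  simp [eq_comm]

lemma polyAct_comp (g : GL8) (f : PS) (n : ℕ) :
    polyAct g (homogeneousComponent n f) = homogeneousComponent n (polyAct g f) := by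
  conv_rhs => rw [← sum_homogeneousComponent f]
  conv_lhs => rw [← sum_homogeneousComponent f]
  simp only [map_sum]
  refine Finset.sum_congr rfl fun i _ => ?_
  rw [comp_of_homog (homogeneousComponent_isHomogeneous i f),
    comp_of_homog (polyAct_homog g (homogeneousComponent_isHomogeneous i f))]
  split_ifs <;> simp

lemma comp_mem_inv {f : PS} (hf : f ∈ invSubalgebra) (n : ℕ) :
    homogeneousComponent n f ∈ invSubalgebra := by
  rw [mem_inv] at hf ⊢
  intro g hg
  rw [polyAct_comp, hf g hg]

lemma comp_mul_homog (a : PS) {q : PS} {d : ℕ} (hq : q.IsHomogeneous d) (m : ℕ) :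
    homogeneousComponent m (a * q) =
      if d ≤ m then homogeneousComponent (m - d) a * q else 0 := by
  conv_lhs => rw [← sum_homogeneousComponent a, Finset.sum_mul, map_sum]
  have h1 : ∀ i, homogeneousComponent m (homogeneousComponent i a * q) =
      if i + d = m then homogeneousComponent i a * q else 0 := fun i =>
    comp_of_homog ((homogeneousComponent_isHomogeneous i a).mul hq) m
  simp only [h1]
  split_ifs with h
  · conv_rhs => rw [← sum_homogeneousComponent a, map_sum, Finset.sum_mul]
    refine Finset.sum_congr rfl fun i _ => ?_
    rw [comp_of_homog (homogeneousComponent_isHomogeneous i a)]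
    have : i + d = m ↔ i = m - d := by omega
    simp only [this]
    split_ifs <;> simp
  · refine Finset.sum_eq_zero fun i _ => ?_
    rw [if_neg (by omega)]

/-! #### Averaging -/

noncomputable instance : Fintype WeylE8 := Fintype.ofFinite _

/-- The Reynolds operator, with values in polynomials. -/
noncomputable def avg0 (f : PS) : PS :=
  C ((Fintype.card WeylE8 : ℚ)⁻¹) * ∑ w : WeylE8, polyAct w.1 f

lemma card_ne : (Fintype.card WeylE8 : ℚ) ≠ 0 := by
  have : Fintype.card WeylE8 ≠ 0 := Fintype.card_ne_zero
  exact_mod_cast this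

lemma avg0_mem (f : PS) : avg0 f ∈ invSubalgebra := by
  rw [mem_inv]
  intro g hg
  have h : ∑ w : WeylE8, polyAct g (polyAct w.1 f) = ∑ w : WeylE8, polyAct w.1 f := by
    rw [← Equiv.sum_comp (Equiv.mulLeft (⟨g, hg⟩ : WeylE8)) (fun w : WeylE8 => polyAct w.1 f)]
    refine Finset.sum_congr rfl fun w _ => ?_
    rw [← polyAct_mul_apply, Equiv.coe_mulLeft, Subgroup.coe_mul]
  rw [avg0, map_mul, MvPolynomial.algHom_C, map_sum, MvPolynomial.algebraMap_eq, h]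

lemma avg0_of_inv {f : PS} (hf : f ∈ invSubalgebra) : avg0 f = f := by
  rw [avg0]
  rw [Finset.sum_congr rfl fun (w : WeylE8) _ => mem_inv.1 hf w.1 w.2]
  rw [Finset.sum_const, Finset.card_univ, nsmul_eq_mul, ← mul_assoc]
  rw [show ((Fintype.card WeylE8 : ℕ) : PS) = C (Fintype.card WeylE8 : ℚ) by simp,
    ← map_mul, inv_mul_cancel₀ card_ne, C_1, one_mul]

/-- The Reynolds operator. -/
noncomputable def avg : PS →ₗ[invSubalgebra] invSubalgebra where
  toFun f := ⟨avg0 f, avg0_mem f⟩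
  map_add' f g := by
    ext1
    simp [avg0, Finset.sum_add_distrib, mul_add]
  map_smul' r f := by
    ext1
    simp only [avg0, Subalgebra.smul_def, smul_eq_mul, map_mul, RingHom.id_apply,
      MulMemClass.coe_mul]
    rw [Finset.sum_congr rfl fun (w : WeylE8) _ => by rw [mem_inv.1 r.2 w.1 w.2]]
    rw [← Finset.mul_sum]
    ring

lemma avg0_homog {f : PS} {n : ℕ} (hf : f.IsHomogeneous n) : (avg0 f).IsHomogeneous n :=
  IsHomogeneous.C_mul (IsHomogeneous.sum _ _ _ fun w _ => polyAct_homog w.1 hf) _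

/-! #### Divided differences -/

/-- The simple root as a linear form. -/
noncomputable def rootForm (i : Fin 8) : PS := ∑ j, C (cartanE8 j i) * X j

lemma rootForm_homog (i : Fin 8) : (rootForm i).IsHomogeneous 1 :=
  IsHomogeneous.sum _ _ _ fun _ _ => isHomogeneous_C_mul_X _ _

lemma rootForm_ne (i : Fin 8) : rootForm i ≠ 0 := by
  intro h
  have := congrArg (coeff (Finsupp.single i 1)) h
  simp [rootForm, coeff_sum, coeff_C_mul, coeff_X, Finsupp.single_left_inj, cartanE8_diag] at this

lemma sE8_inv (i : Fin 8) : (sE8 i)⁻¹ = sE8 i := rfl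

lemma polyAct_sE8_X (i k : Fin 8) :
    polyAct (sE8 i) (X k) = X k - if k = i then rootForm i else 0 := by
  rw [polyAct_X, sE8_inv]
  have h : ∀ j, (sE8 i • (Pi.single j 1 : Fin 8 → ℚ)) k =
      (Pi.single j 1 : Fin 8 → ℚ) k - cartanE8 j i * (Pi.single i 1 : Fin 8 → ℚ) k := by
    intro j
    rw [sE8_smul, reflE8_apply, phiE8_apply]
    simp [Pi.single_apply]
  simp only [h, map_sub, sub_mul, Finset.sum_sub_distrib]
  congr 1
  · simp [Pi.single_apply]
  · split_ifs with hk
    · subst hk; simp [rootForm]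
    · simp [Pi.single_apply, hk]

lemma div_exists (i : Fin 8) (f : PS) : ∃ q, rootForm i * q = f - polyAct (sE8 i) f := by
  have : rootForm i ∣ f - polyAct (sE8 i) f := by
    rw [← Ideal.mem_span_singleton, ← Ideal.Quotient.eq]
    have : (Ideal.Quotient.mkₐ ℚ (Ideal.span {rootForm i})) =
        (Ideal.Quotient.mkₐ ℚ (Ideal.span {rootForm i})).comp (polyAct (sE8 i)) := by
      refine MvPolynomial.algHom_ext fun k => ?_
      rw [AlgHom.comp_apply, polyAct_sE8_X, map_sub]
      split_ifs
      · have : (Ideal.Quotient.mkₐ ℚ (Ideal.span {rootForm i})) (rootForm i) = 0 :=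
          Ideal.Quotient.eq_zero_iff_mem.2 (Ideal.mem_span_singleton_self _)
        rw [this, sub_zero]
      · simp
    exact DFunLike.congr_fun this f
  obtain ⟨q, hq⟩ := this
  exact ⟨q, hq.symm⟩

/-- Divided differences. -/
noncomputable def dd0 (i : Fin 8) (f : PS) : PS := (div_exists i f).choose

lemma dd0_spec (i : Fin 8) (f : PS) : rootForm i * dd0 i f = f - polyAct (sE8 i) f :=
  (div_exists i f).choose_spec

/-- Divided differences, as linear maps over the invariants. -/
noncomputable def dd (i : Fin 8) : PS →ₗ[invSubalgebra] PS where
  toFun := dd0 i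
  map_add' f g := by
    apply mul_left_cancel₀ (rootForm_ne i)
    rw [mul_add, dd0_spec, dd0_spec, dd0_spec, map_add]; ring
  map_smul' r f := by
    apply mul_left_cancel₀ (rootForm_ne i)
    simp only [Subalgebra.smul_def, smul_eq_mul, RingHom.id_apply]
    rw [dd0_spec, mul_left_comm, dd0_spec, map_mul, mem_inv.1 r.2 _ (sE8_mem i)]; ring

lemma dd_spec (i : Fin 8) (f : PS) : rootForm i * dd i f = f - polyAct (sE8 i) f := dd0_spec i f

lemma dd_homog (i : Fin 8) {f : PS} {n : ℕ} (hf : f.IsHomogeneous (n + 1)) :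
    (dd i f).IsHomogeneous n := by
  have h := dd_spec i f
  have h2 : (f - polyAct (sE8 i) f).IsHomogeneous (n + 1) := hf.sub (polyAct_homog _ hf)
  have h3 := comp_mul_homog (dd i f) (rootForm_homog i) (n + 1)
  rw [mul_comm, h, comp_of_homog h2, if_pos rfl, if_pos (by omega), ← h, mul_comm] at h3
  have := mul_right_cancel₀ (rootForm_ne i) h3
  rw [this]
  exact homogeneousComponent_isHomogeneous _ _

/-! #### The ideal of invariants of positive degree -/

/-- The ideal generated by the invariants without constant term. -/
noncomputable def IP : Ideal PS := Ideal.span {f | f ∈ invSubalgebra ∧ constantCoeff f = 0}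

lemma polyAct_IP {g : GL8} (hg : g ∈ WeylE8) {f : PS} (hf : f ∈ IP) : polyAct g f ∈ IP := by
  have : IP ≤ IP.comap (polyAct g).toRingHom := by
    conv_lhs => rw [IP]
    rw [Ideal.span_le]
    intro f hf
    change polyAct g f ∈ IP
    rw [mem_inv.1 hf.1 g hg]
    exact Ideal.subset_span hf
  exact this hf

lemma inv_sub_const_mem {a : PS} (ha : a ∈ invSubalgebra) : a - C (constantCoeff a) ∈ IP := by
  refine Ideal.subset_span ⟨sub_mem ha ?_, by simp⟩
  exact invSubalgebra.algebraMap_mem _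

lemma map_smul_top {M : Type*} [AddCommGroup M] [Module invSubalgebra M]
    (φ : PS →ₗ[invSubalgebra] M) (J : Ideal invSubalgebra) {x : PS}
    (hx : x ∈ J • (⊤ : Submodule invSubalgebra PS)) :
    φ x ∈ J • (⊤ : Submodule invSubalgebra M) := by
  have := Submodule.mem_map_of_mem (f := φ) hx
  rw [Submodule.map_smul''] at this
  exact Submodule.smul_mono le_rfl le_top this

/-- The lemma of Chevalley. -/
lemma chevalley (J : Ideal invSubalgebra) (r : invSubalgebra) (hr : r ∉ J) :
    ∀ (n : ℕ) (p : PS), p.IsHomogeneous n → r • p ∈ J • (⊤ : Submodule invSubalgebra PS) →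
      p ∈ IP := by
  intro n
  induction n with
  | zero =>
    intro p hp h
    have hp' : p = C (coeff 0 p) := by
      conv_lhs => rw [← homogeneousComponent_eq_self hp]
      rw [homogeneousComponent_zero]
    by_cases hc : coeff 0 p = 0
    · rw [hp', hc, C_0]; exact zero_mem _
    · exfalso
      apply hr
      have h1 := map_smul_top avg J h
      rw [map_smul] at h1
      have h2 : avg p = algebraMap ℚ invSubalgebra (coeff 0 p) := by
        ext1
        rw [hp']
        have : C (coeff 0 p) ∈ invSubalgebra := invSubalgebra.algebraMap_mem _
        change avg0 _ = _
        rw [avg0_of_inv this]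
        simp [MvPolynomial.algebraMap_eq]
      rw [h2, smul_eq_mul, Ideal.mul_top] at h1
      have h3 := J.mul_mem_right (algebraMap ℚ invSubalgebra (coeff 0 p)⁻¹) h1
      rwa [smul_eq_mul, mul_assoc, ← map_mul, mul_inv_cancel₀ hc, map_one, mul_one] at h3
  | succ n ih =>
    intro p hp h
    have h1 : ∀ i, dd i p ∈ IP := fun i => ih _ (dd_homog i hp) (by
      rw [← map_smul]; exact map_smul_top (dd i) J h)
    have h2 : ∀ g ∈ WeylE8, p - polyAct g p ∈ IP := by
      intro g hg
      induction hg using Subgroup.closure_induction with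
      | mem x hx =>
        obtain ⟨i, rfl⟩ := hx
        rw [← dd_spec]
        exact IP.mul_mem_left _ (h1 i)
      | one => simp [polyAct_one]
      | mul x y hx hy hx' hy' =>
        have := IP.add_mem hx' (polyAct_IP hx hy')
        rwa [map_sub, sub_add_sub_cancel, ← polyAct_mul_apply] at this
      | inv x hx hx' =>
        have := IP.neg_mem (polyAct_IP (inv_mem hx) hx')
        rwa [map_sub, neg_sub, ← polyAct_mul_apply, inv_mul_cancel, polyAct_one] at this
    have h3 : p - avg0 p ∈ IP := by
      have : p - avg0 p = C ((Fintype.card WeylE8 : ℚ)⁻¹) *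
          ∑ w : WeylE8, (p - polyAct w.1 p) := by
        rw [avg0, Finset.sum_sub_distrib, mul_sub]
        congr 1
        rw [Finset.sum_const, Finset.card_univ, nsmul_eq_mul, ← mul_assoc]
        rw [show ((Fintype.card WeylE8 : ℕ) : PS) = C (Fintype.card WeylE8 : ℚ) by simp,
          ← map_mul, inv_mul_cancel₀ card_ne, C_1, one_mul]
      rw [this]
      exact IP.mul_mem_left _ (IP.sum_mem fun w _ => h2 w.1 w.2)
    have h4 : avg0 p ∈ IP := by
      refine Ideal.subset_span ⟨avg0_mem p, ?_⟩
      rw [constantCoeff_eq]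
      exact (avg0_homog hp).coeff_eq_zero (by simp)
    have := IP.add_mem h3 h4
    rwa [sub_add_cancel] at this

/-! #### Linear independence -/

/-- The quotient map. -/
noncomputable abbrev mkQ : PS →ₐ[ℚ] PS ⧸ IP := Ideal.Quotient.mkₐ ℚ IP

lemma mkQ_eq_zero {f : PS} : mkQ f = 0 ↔ f ∈ IP := Ideal.Quotient.eq_zero_iff_mem

lemma mkQ_inv_mul {a : PS} (ha : a ∈ invSubalgebra) (p : PS) :
    mkQ (a * p) = constantCoeff a • mkQ p := by
  rw [← map_smul, ← sub_eq_zero, ← map_sub, mkQ_eq_zero, MvPolynomial.smul_eq_C_mul, ← sub_mul]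
  exact IP.mul_mem_right _ (inv_sub_const_mem ha)

lemma indep_aux {κ : Type*} [DecidableEq κ] (n : ℕ) (r : κ → PS) (d : κ → ℕ) (s : Finset κ) :
    (∀ i ∈ s, r i ∈ invSubalgebra ∧ (r i).IsHomogeneous (d i)) →
    ∀ (p : κ → PS) (e : κ → ℕ), (∀ i ∈ s, (p i).IsHomogeneous (e i) ∧ d i + e i = n) →
      LinearIndepOn ℚ (fun i => mkQ (p i)) (s : Set κ) →
      ∑ i ∈ s, r i * p i = 0 → ∀ i ∈ s, r i = 0 := by
  induction s using Finset.induction_on with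
  | empty => intro _ _ _ _ _ _ i hi; simp at hi
  | insert i₀ s hi₀ ih =>
    intro hr p e hp hli hsum
    have hr0 := hr i₀ (Finset.mem_insert_self _ _)
    have hp0 := hp i₀ (Finset.mem_insert_self _ _)
    have hrs : ∀ i ∈ s, r i ∈ invSubalgebra ∧ (r i).IsHomogeneous (d i) :=
      fun i hi => hr i (Finset.mem_insert_of_mem hi)
    rw [Finset.sum_insert hi₀] at hsum
    -- the first coefficient lies in the ideal of the others
    have hmem : ∃ a : κ → PS, (∀ i, a i ∈ invSubalgebra) ∧ r i₀ = ∑ i ∈ s, a i * r i := by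
      by_contra hcon
      set J : Ideal invSubalgebra :=
        Ideal.span (Set.range fun i : s => (⟨r i.1, (hrs i.1 i.2).1⟩ : invSubalgebra)) with hJ
      have hnot : (⟨r i₀, hr0.1⟩ : invSubalgebra) ∉ J := by
        intro h
        rw [hJ, Ideal.mem_span_range_iff_exists_fun] at h
        obtain ⟨c, hc⟩ := h
        apply hcon
        refine ⟨fun i => if hi : i ∈ s then (c ⟨i, hi⟩ : PS) else 0, fun i => ?_, ?_⟩
        · dsimp only
          split_ifs
          · exact (c _).2
          · exact zero_mem _
        · have := congrArg Subtype.val hc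
          rw [← Finset.sum_coe_sort s]
          refine this.symm.trans ?_
          simp
      have h0 : p i₀ ∈ IP := by
        refine chevalley J _ hnot (e i₀) _ hp0.1 ?_
        have : (⟨r i₀, hr0.1⟩ : invSubalgebra) • p i₀ = -∑ i ∈ s, r i * p i :=
          eq_neg_of_add_eq_zero_left hsum
        rw [this]
        refine Submodule.neg_mem _ (Submodule.sum_mem _ fun i hi => ?_)
        exact Submodule.smul_mem_smul (r := (⟨r i, (hrs i hi).1⟩ : invSubalgebra))
          (Ideal.subset_span ⟨⟨i, hi⟩, rfl⟩) (Submodule.mem_top (x := p i))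
      rw [← mkQ_eq_zero] at h0
      exact hli.ne_zero (by simp) h0
    obtain ⟨a, ha, hra⟩ := hmem
    -- make the coefficients homogeneous
    set a' : κ → PS := fun i =>
      if d i ≤ d i₀ then homogeneousComponent (d i₀ - d i) (a i) else 0 with ha'
    have ha'R : ∀ i, a' i ∈ invSubalgebra := by
      intro i
      simp only [ha']
      split_ifs
      · exact comp_mem_inv (ha i) _
      · exact zero_mem _
    have hra' : r i₀ = ∑ i ∈ s, a' i * r i := by
      have := congrArg (homogeneousComponent (d i₀)) hra
      rw [comp_of_homog hr0.2, if_pos rfl, map_sum] at this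
      rw [this]
      refine Finset.sum_congr rfl fun i hi => ?_
      rw [comp_mul_homog _ (hrs i hi).2]
      simp only [ha']
      split_ifs <;> simp
    have hzero : ∀ i ∈ s, r i = 0 := by
      refine ih hrs (fun i => p i + a' i * p i₀) e ?_ ?_ ?_
      · intro i hi
        have hpi := hp i (Finset.mem_insert_of_mem hi)
        refine ⟨hpi.1.add ?_, hpi.2⟩
        simp only [ha']
        split_ifs with h
        · have := (homogeneousComponent_isHomogeneous (d i₀ - d i) (a i)).mul hp0.1
          rwa [show d i₀ - d i + e i₀ = e i by omega] at this
        · rw [zero_mul]; exact isHomogeneous_zero _ _ _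
      · rw [linearIndepOn_finset_iff] at hli ⊢
        intro c hc
        have := hli (Function.update c i₀ (∑ i ∈ s, c i * constantCoeff (a' i))) ?_
        · intro i hi
          have h := this i (Finset.mem_insert_of_mem hi)
          rwa [Function.update_of_ne (by rintro rfl; exact hi₀ hi)] at h
        · rw [Finset.sum_insert hi₀, Function.update_self]
          rw [← hc, Finset.sum_smul, ← Finset.sum_add_distrib]
          refine Finset.sum_congr rfl fun i hi => ?_
          rw [Function.update_of_ne (by rintro rfl; exact hi₀ hi), map_add, mkQ_inv_mul (ha'R i),
            smul_add, mul_smul, add_comm]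
      · rw [← hsum, hra', Finset.sum_mul, ← Finset.sum_add_distrib]
        refine Finset.sum_congr rfl fun i _ => ?_
        ring
    intro i hi
    rcases Finset.mem_insert.1 hi with rfl | hi
    · rw [hra']
      exact Finset.sum_eq_zero fun j hj => by rw [hzero j hj, mul_zero]
    · exact hzero i hi

theorem free_inv : Module.Free invSubalgebra PS := by
  classical
  obtain ⟨κ, m, hminj, hspan, hli⟩ := exists_linearIndependent' ℚ
    (fun m : Fin 8 →₀ ℕ => mkQ (monomial m (1 : ℚ)))
  set b : κ → PS := fun k => monomial (m k) (1 : ℚ) with hb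
  have hbh : ∀ k, (b k).IsHomogeneous (m k).degree := fun k => isHomogeneous_monomial _ rfl
  -- linear independence
  have hind : LinearIndependent invSubalgebra b := by
    rw [linearIndependent_iff']
    intro s g hg i hi
    have key : ∀ q, homogeneousComponent q (g i : PS) = 0 := by
      intro q
      set n := q + (m i).degree with hn
      have := indep_aux n (fun j => homogeneousComponent (n - (m j).degree) (g j : PS))
        (fun j => n - (m j).degree) (s.filter fun j => (m j).degree ≤ n)
        (fun j _ => ⟨comp_mem_inv (g j).2 _, homogeneousComponent_isHomogeneous _ _⟩)
        b (fun j => (m j).degree)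
        (fun j hj => ⟨hbh j, by have := (Finset.mem_filter.1 hj).2; omega⟩)
        (hli.linearIndepOn _) ?_ i
        (Finset.mem_filter.2 ⟨hi, by omega⟩)
      · simpa [hn] using this
      · have := congrArg (homogeneousComponent n) hg
        rw [map_sum, map_zero] at this
        rw [← this, Finset.sum_filter]
        refine Finset.sum_congr rfl fun j _ => ?_
        rw [Subalgebra.smul_def, smul_eq_mul, comp_mul_homog _ (hbh j)]
    ext1
    rw [← sum_homogeneousComponent (g i : PS)]
    simp [key]
  -- spanning
  have hcompspan : ∀ n, ∀ x ∈ Submodule.span ℚ (Set.range b),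
      homogeneousComponent n x ∈ Submodule.span invSubalgebra (Set.range b) := by
    intro n x hx
    induction hx using Submodule.span_induction with
    | mem x hx =>
      obtain ⟨k, rfl⟩ := hx
      rw [comp_of_homog (hbh k)]
      split_ifs
      · exact Submodule.subset_span ⟨k, rfl⟩
      · exact zero_mem _
    | zero => simp
    | add x y _ _ hx hy => rw [map_add]; exact add_mem hx hy
    | smul c x _ hx =>
      rw [map_smul, ← algebraMap_smul invSubalgebra c]
      exact Submodule.smul_mem _ _ hx
  have hhom : ∀ n, ∀ f : PS, f.IsHomogeneous n →
      f ∈ Submodule.span invSubalgebra (Set.range b) := by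
    intro n
    induction n using Nat.strong_induction_on with
    | _ n ih =>
    have hIP : ∀ x ∈ IP, ∀ a : PS, homogeneousComponent n (a * x) ∈
        Submodule.span invSubalgebra (Set.range b) := by
      intro x hx
      induction hx using Submodule.span_induction with
      | mem x hx =>
        intro a
        rw [← sum_homogeneousComponent x, Finset.mul_sum, map_sum]
        refine Submodule.sum_mem _ fun j _ => ?_
        rw [comp_mul_homog _ (homogeneousComponent_isHomogeneous j x)]
        split_ifs with hj
        · rcases Nat.eq_zero_or_pos j with rfl | hj0
          · rw [homogeneousComponent_zero, ← constantCoeff_eq, hx.2]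
            simp
          · rw [mul_comm]
            exact Submodule.smul_mem _ (⟨_, comp_mem_inv hx.1 j⟩ : invSubalgebra)
              (ih (n - j) (by omega) _ (homogeneousComponent_isHomogeneous _ _))
        · exact zero_mem _
      | zero => simp
      | add x y _ _ hx hy => intro a; rw [mul_add, map_add]; exact add_mem (hx a) (hy a)
      | smul c x _ hx => intro a; rw [smul_eq_mul, ← mul_assoc]; exact hx _
    intro f hf
    have h1 : ∃ u ∈ Submodule.span ℚ (Set.range b), mkQ u = mkQ f := by
      have h2 : mkQ f ∈ Submodule.span ℚ (Set.range
          (fun m : Fin 8 →₀ ℕ => mkQ (monomial m (1 : ℚ)))) := by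
        rw [f.as_sum, map_sum]
        refine Submodule.sum_mem _ fun v _ => ?_
        have : monomial v (coeff v f) = coeff v f • monomial v (1 : ℚ) := by
          simp [smul_monomial]
        rw [this, map_smul]
        exact Submodule.smul_mem _ _ (Submodule.subset_span ⟨v, rfl⟩)
      rw [← hspan] at h2
      have h3 : Set.range ((fun m : Fin 8 →₀ ℕ => mkQ (monomial m (1 : ℚ))) ∘ m) =
          mkQ.toLinearMap '' (Set.range b) := by
        rw [← Set.range_comp]; rfl
      rw [h3, Submodule.span_image] at h2
      exact h2
    obtain ⟨u, hu, huf⟩ := h1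
    have h4 : f - u ∈ IP := by
      rw [← mkQ_eq_zero, map_sub, huf, sub_self]
    have h5 := hIP _ h4 1
    rw [one_mul, map_sub, comp_of_homog hf, if_pos rfl] at h5
    have := add_mem h5 (hcompspan n u hu)
    rwa [sub_add_cancel] at this
  have htop : ⊤ ≤ Submodule.span invSubalgebra (Set.range b) := by
    intro f _
    rw [← sum_homogeneousComponent f]
    exact Submodule.sum_mem _ fun j _ => hhom j _ (homogeneousComponent_isHomogeneous _ _)
  exact Module.Free.of_basis (Module.Basis.mk hind htop)

end E8Aux

/-! ### Part C: the rank -/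

namespace E8Aux

noncomputable instance : MulSemiringAction WeylE8 PS where
  smul g f := polyAct g.1 f
  one_smul f := by change polyAct 1 f = f; rw [polyAct_one]; rfl
  mul_smul g h f := polyAct_mul_apply g.1 h.1 f
  smul_zero g := map_zero _
  smul_add g := map_add _
  smul_one g := map_one _
  smul_mul g := map_mul _

lemma weyl_smul_def (g : WeylE8) (f : PS) : g • f = polyAct g.1 f := rfl

lemma polyAct_inj {g h : GL8} (H : ∀ f, polyAct g f = polyAct h f) : g = h := by
  have key : g⁻¹ = h⁻¹ := by
    ext1
    refine LinearMap.pi_ext' fun j => LinearMap.ext_ring ?_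
    funext i
    have := congrArg (coeff (Finsupp.single j 1)) (H (X i))
    rw [polyAct_X, polyAct_X] at this
    simp [coeff_sum, coeff_C_mul, coeff_X, Finsupp.single_left_inj] at this
    exact ((congrFun (by simp; rfl) i).trans this).trans (congrFun (by simp; rfl) i)
  exact inv_injective key

instance : IsGaloisGroup WeylE8 invSubalgebra PS where
  faithful := ⟨fun {g h} H => Subtype.ext (polyAct_inj H)⟩
  commutes := ⟨fun g r f => by
    rw [Subalgebra.smul_def, Subalgebra.smul_def, smul_eq_mul, smul_eq_mul, weyl_smul_def,
      weyl_smul_def, map_mul, mem_inv.1 r.2 g.1 g.2]⟩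
  isInvariant := ⟨fun f hf => ⟨⟨f, mem_inv.2 fun g hg => hf ⟨g, hg⟩⟩, rfl⟩⟩

attribute [local instance] FractionRing.liftAlgebra in
/-- The rank of a domain over the invariants of a finite group acting faithfully. -/
theorem rank_eq_card_galois (G : Type*) (A B : Type) [CommRing A] [IsDomain A] [CommRing B]
    [IsDomain B] [Algebra A B] [FaithfulSMul A B] [Group G] [Finite G] [MulSemiringAction G B]
    [hG0 : IsGaloisGroup G A B] : Module.rank A B = Nat.card G := by
  have hinteg : Algebra.IsIntegral A B := hG0.isInvariant.isIntegral
  have : Algebra.IsAlgebraic A B := hinteg.isAlgebraic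
  rw [← Algebra.IsAlgebraic.rank_fractionRing A B]
  let := IsFractionRing.mulSemiringAction G B (FractionRing B)
  have hG : IsGaloisGroup G (FractionRing A) (FractionRing B) :=
    IsGaloisGroup.to_isFractionRing G A B _ _
  have := IsGaloisGroup.finiteDimensional G (FractionRing A) (FractionRing B)
  rw [← Module.finrank_eq_rank, ← IsGaloisGroup.card_eq_finrank G (FractionRing A) (FractionRing B)]

theorem rank_inv : Module.rank invSubalgebra PS = 696729600 := by
  rw [rank_eq_card_galois WeylE8 invSubalgebra PS, card_weyl]
  norm_num

end E8Aux

/-- The polynomial algebra `ℚ[x₁,…,x₈]` is a free module of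
rank `696729600 = |W(E₈)|` over the invariant subalgebra. -/
theorem free_over_invariants_WE8 :
    Module.Free invSubalgebra (MvPolynomial (Fin 8) ℚ) ∧
    Module.rank invSubalgebra (MvPolynomial (Fin 8) ℚ) = 696729600 := by
  exact ⟨E8Aux.free_inv, E8Aux.rank_inv⟩
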